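/- arXiv:1601.04001 — 10 statements merged into one kernel-verified Lean document; each statement's English description precedes it below -/
import Mathlib

section
/- Let F : E → E be locally Lipschitz, let x_n, x_{n−1}, y_{n−1} ∈ E, and let λ_{n−1} > 0, λ_max > 0, α > 0, σ ∈ (0,1), θ_{n−1} ≥ 0. Then there exists i ∈ ℕ such that, setting θ = σ^i, y = x_n + θ·(x_n − x_{n−1}), and λ = θ·λ_{n−1}, one has λ ≤ min( ((1+θ_{n−1})/θ)·λ_{n−1}, λ_max ) and ‖λ·F(y) − λ_{n−1}·θ·F(y_{n−1})‖ ≤ α·‖y − y_{n−1}‖. (That is, the linesearch of Algorithm 1 always terminates.) -/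
open scoped RealInnerProductSpace

/-- The linesearch of Algorithm 1 always terminates. -/
theorem linesearch_alg1_terminates
    {E : Type*} [NormedAddCommGroup E] [InnerProductSpace ℝ E] [FiniteDimensional ℝ E]
    (F : E → E) (hF : LocallyLipschitz F)
    (xn xnm1 ynm1 : E) (lamm1 lamMax α σ θm1 : ℝ)
    (hlam : 0 < lamm1) (hmax : 0 < lamMax) (hα : 0 < α)
    (hσ : σ ∈ Set.Ioo (0 : ℝ) 1) (hθ : 0 ≤ θm1) :
    ∃ i : ℕ,
      σ ^ i * lamm1 ≤ min ((1 + θm1) / σ ^ i * lamm1) lamMax ∧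
      ‖(σ ^ i * lamm1) • F (xn + σ ^ i • (xn - xnm1)) - (lamm1 * σ ^ i) • F ynm1‖ ≤
        α * ‖xn + σ ^ i • (xn - xnm1) - ynm1‖ := by
  obtain ⟨h0, h1⟩ := hσ
  have hp : Filter.Tendsto (fun i : ℕ => σ ^ i) Filter.atTop (nhds 0) :=
    tendsto_pow_atTop_nhds_zero_of_lt_one h0.le h1
  have hy : Filter.Tendsto (fun i : ℕ => xn + σ ^ i • (xn - xnm1)) Filter.atTop (nhds xn) := by
    simpa using (hp.smul_const (xn - xnm1)).const_add xn
  have hl : Filter.Tendsto (fun i : ℕ => σ ^ i * lamm1) Filter.atTop (nhds 0) := by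
    simpa using hp.mul_const lamm1
  have hA : ∀ᶠ i : ℕ in Filter.atTop, σ ^ i * lamm1 ≤ lamMax := hl.eventually_le_const hmax
  have hB : ∀ i : ℕ, σ ^ i * lamm1 ≤ (1 + θm1) / σ ^ i * lamm1 := by
    intro i
    have hs : 0 < σ ^ i := pow_pos h0 i
    have hs1 : σ ^ i ≤ 1 := pow_le_one₀ h0.le h1.le
    refine mul_le_mul_of_nonneg_right ?_ hlam.le
    rw [le_div_iff₀ hs]
    nlinarith
  have hC : ∀ᶠ i : ℕ in Filter.atTop,
      ‖(σ ^ i * lamm1) • F (xn + σ ^ i • (xn - xnm1)) - (lamm1 * σ ^ i) • F ynm1‖ ≤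
        α * ‖xn + σ ^ i • (xn - xnm1) - ynm1‖ := by
    by_cases hx : ynm1 = xn
    · subst hx
      obtain ⟨K, t, ht, hK⟩ := hF ynm1
      have hk : Filter.Tendsto (fun i : ℕ => σ ^ i * lamm1 * K) Filter.atTop (nhds 0) := by
        simpa using hl.mul_const (K : ℝ)
      filter_upwards [hy.eventually_mem ht, hk.eventually_le_const hα] with i hi hki
      have hs : 0 < σ ^ i * lamm1 := mul_pos (pow_pos h0 i) hlam
      rw [mul_comm lamm1, ← smul_sub, norm_smul, Real.norm_of_nonneg hs.le]
      have hn := hK.norm_sub_le hi (mem_of_mem_nhds ht)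
      calc _ ≤ σ ^ i * lamm1 * (K * ‖ynm1 + σ ^ i • (ynm1 - xnm1) - ynm1‖) :=
            mul_le_mul_of_nonneg_left hn hs.le
        _ = σ ^ i * lamm1 * K * ‖ynm1 + σ ^ i • (ynm1 - xnm1) - ynm1‖ := by ring
        _ ≤ _ := mul_le_mul_of_nonneg_right hki (norm_nonneg _)
    · have hFy := (hF.continuous.tendsto xn).comp hy
      have hL := ((hl.smul hFy).sub ((hp.const_mul lamm1).smul_const (F ynm1))).norm
      have hR := ((hy.sub_const ynm1).norm).const_mul α
      have hpos : 0 < α * ‖xn - ynm1‖ :=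
        mul_pos hα (norm_pos_iff.2 (sub_ne_zero.2 (Ne.symm hx)))
      have hlt := hL.eventually_lt hR (by simpa using hpos)
      filter_upwards [hlt] with i hi
      exact hi.le
  obtain ⟨i, hi, hj⟩ := (hA.and hC).exists
  exact ⟨i, le_min (hB i) hi, hj⟩
end

section
/- Let C ⊆ E be a nonempty closed convex set, F : E → E any map, α ≥ 0, λ_n, λ_{n−1} > 0, θ_n ≥ 0, and points x_{n−1}, x_n, x_{n+1}, y_{n−1}, y_n ∈ E. Assume: x_{n−1} ∈ C; x_n is the point of C closest to x_{n−1} − λ_{n−1}·F(y_{n−1}); y_n = x_n + θ_n·(x_n − x_{n−1}); x_{n+1} is the point of C closest to x_n − λ_n·F(y_n); and ‖λ_n·F(y_n) − λ_{n−1}·θ_n·F(y_{n−1})‖ ≤ α·‖y_n − y_{n−1}‖. Then for every x ∈ C: ‖x_{n+1} − x‖² ≤ ‖x_n − x‖² + 2α·‖y_n − y_{n−1}‖·‖x_{n+1} − y_n‖ − ‖y_n − x_n‖² − ‖x_{n+1} − y_n‖² − 2·λ_n·⟪F(y_n), y_n − x⟫. -/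
open scoped RealInnerProductSpace

theorem proj_inner_aux {E : Type*} [NormedAddCommGroup E] [InnerProductSpace ℝ E]
    {C : Set E} (hC : Convex ℝ C) {u v : E} (hv : v ∈ C)
    (h : ∀ z ∈ C, ‖v - u‖ ≤ ‖z - u‖) : ∀ w ∈ C, ⟪u - v, w - v⟫ ≤ 0 := by
  refine (norm_eq_iInf_iff_real_inner_le_zero hC hv).1 ?_
  have : Nonempty C := ⟨⟨v, hv⟩⟩
  apply le_antisymm
  · refine le_ciInf fun w => ?_
    rw [norm_sub_rev u v, norm_sub_rev u w]
    exact h w w.2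
  · exact ciInf_le (f := fun w : C => ‖u - w‖) ⟨0, by rintro _ ⟨w, rfl⟩; exact norm_nonneg _⟩ ⟨v, hv⟩

/-- Basic inequality for Algorithm 1 (Lemma 2.4 of the paper). -/
theorem basic_lemma_alg1
    {E : Type*} [NormedAddCommGroup E] [InnerProductSpace ℝ E] [FiniteDimensional ℝ E]
    (C : Set E) (hCne : C.Nonempty) (hCcl : IsClosed C) (hCcv : Convex ℝ C)
    (F : E → E) (α lamn lamm1 θn : ℝ)
    (hα : 0 ≤ α) (hlamn : 0 < lamn) (hlamm1 : 0 < lamm1) (hθn : 0 ≤ θn)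
    (xnm1 xn xnp1 ynm1 yn : E)
    (hxm1C : xnm1 ∈ C)
    (hxnC : xn ∈ C)
    (hxn : ∀ z ∈ C, ‖xn - (xnm1 - lamm1 • F ynm1)‖ ≤ ‖z - (xnm1 - lamm1 • F ynm1)‖)
    (hyn : yn = xn + θn • (xn - xnm1))
    (hxnp1C : xnp1 ∈ C)
    (hxnp1 : ∀ z ∈ C, ‖xnp1 - (xn - lamn • F yn)‖ ≤ ‖z - (xn - lamn • F yn)‖)
    (hls : ‖lamn • F yn - (lamm1 * θn) • F ynm1‖ ≤ α * ‖yn - ynm1‖) :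
    ∀ x ∈ C,
      ‖xnp1 - x‖ ^ 2 ≤ ‖xn - x‖ ^ 2 + 2 * α * ‖yn - ynm1‖ * ‖xnp1 - yn‖
        - ‖yn - xn‖ ^ 2 - ‖xnp1 - yn‖ ^ 2 - 2 * lamn * ⟪F yn, yn - x⟫ := by
  intro x hx
  have h1 := proj_inner_aux hCcv hxnp1C hxnp1 x hx
  have h2 := proj_inner_aux hCcv hxnC hxn xnp1 hxnp1C
  have h3 := proj_inner_aux hCcv hxnC hxn xnm1 hxm1C
  have hcs := (neg_le_of_abs_le (abs_real_inner_le_norm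
    (lamn • F yn - (lamm1 * θn) • F ynm1) (xnp1 - yn)))
  have hm := mul_le_mul_of_nonneg_right hls (norm_nonneg (xnp1 - yn))
  have h4 : 0 ≤ ⟪(yn - xn) + (lamm1 * θn) • F ynm1, xnp1 - yn⟫ := by
    have e : ⟪(yn - xn) + (lamm1 * θn) • F ynm1, xnp1 - yn⟫
        = -(θn * ⟪xnm1 - lamm1 • F ynm1 - xn, xnp1 - xn⟫)
          - θn * (θn * ⟪xnm1 - lamm1 • F ynm1 - xn, xnm1 - xn⟫) := by
      have e1 : (yn - xn) + (lamm1 * θn) • F ynm1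
          = (-θn) • (xnm1 - lamm1 • F ynm1 - xn) := by
        rw [hyn]; module
      have e2 : xnp1 - yn = (xnp1 - xn) + θn • (xnm1 - xn) := by
        rw [hyn]; module
      rw [e1, e2, real_inner_smul_left, inner_add_right, real_inner_smul_right]
      ring
    rw [e]
    have := mul_nonneg hθn (neg_nonneg.2 h2)
    have := mul_nonneg hθn (mul_nonneg hθn (neg_nonneg.2 h3))
    linarith
  clear hxn hxnp1 hls h2 h3 hyn
  generalize F ynm1 = G at *
  generalize F yn = H at *
  obtain ⟨u, hu⟩ : ∃ u, u = xnp1 - yn := ⟨_, rfl⟩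
  obtain ⟨v, hv⟩ : ∃ v, v = yn - xn := ⟨_, rfl⟩
  obtain ⟨w, hw⟩ : ∃ w, w = xn - x := ⟨_, rfl⟩
  have a1 : xnp1 - x = u + v + w := by rw [hu, hv, hw]; abel
  have a2 : yn - x = v + w := by rw [hv, hw]; abel
  have a3 : xn - lamn • H - xnp1 = -(u + v + lamn • H) := by rw [hu, hv]; abel
  have a4 : x - xnp1 = -(u + v + w) := by rw [← a1]; abel
  rw [a3, a4] at h1
  rw [a1, a2]
  rw [← hu] at hcs hm h4 ⊢
  rw [← hv] at h4 ⊢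
  rw [← hw]
  have n1 : ‖u + v + w‖ ^ 2 = ‖u‖ ^ 2 + ‖v‖ ^ 2 + ‖w‖ ^ 2
      + 2 * ⟪u, v⟫ + 2 * ⟪u, w⟫ + 2 * ⟪v, w⟫ := by
    rw [norm_add_sq_real, norm_add_sq_real, inner_add_left]; ring
  simp only [inner_neg_left, inner_neg_right, inner_add_left, inner_add_right, inner_sub_left,
    real_inner_smul_left, real_inner_self_eq_norm_sq] at h1 h4 hcs ⊢
  rw [real_inner_comm u v] at *
  rw [n1]
  linarith [real_inner_comm u v]
end

section
/- Let F : E → E be locally Lipschitz, let x_n, x_{n−1}, y_{n−1} ∈ E, and let λ_{n−1} > 0, α > 0, σ ∈ (0,1), and θ_{n−1} with 0 < θ_{n−1} ≤ (1+√5)/2. Then there exists i ∈ ℕ such that, setting θ = √(1+θ_{n−1})·σ^i, y = x_n + θ·(x_n − x_{n−1}), and λ = θ·λ_{n−1}, one has λ·‖F(y) − F(y_{n−1})‖ ≤ α·‖y − y_{n−1}‖. (That is, the linesearch of Algorithm 2 always terminates.) -/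
open scoped RealInnerProductSpace

/-- The linesearch of Algorithm 2 always terminates. -/
theorem linesearch_alg2_terminates
    {E : Type*} [NormedAddCommGroup E] [InnerProductSpace ℝ E] [FiniteDimensional ℝ E]
    (F : E → E) (hF : LocallyLipschitz F)
    (xn xnm1 ynm1 : E) (lamm1 α σ θm1 : ℝ)
    (hlam : 0 < lamm1) (hα : 0 < α) (hσ : σ ∈ Set.Ioo (0 : ℝ) 1)
    (hθ1 : 0 < θm1) (hθ2 : θm1 ≤ (1 + Real.sqrt 5) / 2) :
    ∃ i : ℕ,
      (Real.sqrt (1 + θm1) * σ ^ i * lamm1) *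
          ‖F (xn + (Real.sqrt (1 + θm1) * σ ^ i) • (xn - xnm1)) - F ynm1‖ ≤
        α * ‖xn + (Real.sqrt (1 + θm1) * σ ^ i) • (xn - xnm1) - ynm1‖ := by
  have ht : Filter.Tendsto (fun i : ℕ => Real.sqrt (1 + θm1) * σ ^ i) Filter.atTop (nhds 0) := by
    simpa using (tendsto_pow_atTop_nhds_zero_of_lt_one hσ.1.le hσ.2).const_mul
      (Real.sqrt (1 + θm1))
  have ht0 : ∀ i : ℕ, 0 ≤ Real.sqrt (1 + θm1) * σ ^ i := fun i =>
    mul_nonneg (Real.sqrt_nonneg _) (pow_nonneg hσ.1.le _)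
  obtain ⟨t, htd⟩ : ∃ t : ℕ → ℝ, t = fun i : ℕ => Real.sqrt (1 + θm1) * σ ^ i := ⟨_, rfl⟩
  have hti : ∀ i, Real.sqrt (1 + θm1) * σ ^ i = t i := fun i => by rw [htd]
  simp only [hti] at ht ht0 ⊢
  have hy : Filter.Tendsto (fun i => xn + t i • (xn - xnm1)) Filter.atTop (nhds xn) := by
    simpa using (ht.smul_const (xn - xnm1)).const_add xn
  by_cases hx : xn = ynm1
  · subst hx
    obtain ⟨K, s, hs, hK⟩ := hF xn
    have h1 : Filter.Tendsto (fun i => t i * lamm1 * K) Filter.atTop (nhds 0) := by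
      simpa using (ht.mul_const lamm1).mul_const (K : ℝ)
    obtain ⟨i, hi1, hi2⟩ := ((hy.eventually hs).and (h1.eventually_le_const hα)).exists
    refine ⟨i, ?_⟩
    have h2 := hK.norm_sub_le hi1 (mem_of_mem_nhds hs)
    calc _ ≤ t i * lamm1 * (K * ‖xn + t i • (xn - xnm1) - xn‖) :=
          mul_le_mul_of_nonneg_left h2 (mul_nonneg (ht0 i) hlam.le)
      _ = t i * lamm1 * K * ‖xn + t i • (xn - xnm1) - xn‖ := by ring
      _ ≤ _ := mul_le_mul_of_nonneg_right hi2 (norm_nonneg _)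
  · have hl : Filter.Tendsto (fun i => t i * lamm1 * ‖F (xn + t i • (xn - xnm1)) - F ynm1‖)
        Filter.atTop (nhds 0) := by
      simpa using (ht.mul_const lamm1).mul
        (((hF.continuous.tendsto xn).comp hy).sub_const (F ynm1)).norm
    have hr := ((hy.sub_const ynm1).norm).const_mul α
    have hpos : 0 < α * ‖xn - ynm1‖ := mul_pos hα (norm_pos_iff.2 (sub_ne_zero.2 hx))
    obtain ⟨i, hi⟩ := (hl.eventually_lt hr hpos).exists
    exact ⟨i, hi.le⟩
end

section
/- Let F : E → E be any map, g : E → ℝ convex, α ≥ 0, λ_{n−1} > 0, θ_n > 0, and set λ_n = θ_n·λ_{n−1}. Let x_{n−1}, x_n, x_{n+1}, y_{n−1}, y_n ∈ E satisfy: y_n = x_n + θ_n·(x_n − x_{n−1}); x_n is the minimizer over E of z ↦ λ_{n−1}·g(z) + (1/2)·‖z − (x_{n−1} − λ_{n−1}·F(y_{n−1}))‖²; x_{n+1} is the minimizer over E of z ↦ λ_n·g(z) + (1/2)·‖z − (x_n − λ_n·F(y_n))‖²; and λ_n·‖F(y_n) − F(y_{n−1})‖ ≤ α·‖y_n − y_{n−1}‖.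 Then for every x ∈ E: ‖x_{n+1} − x‖² ≤ ‖x_n − x‖² − ‖y_n − x_n‖² − ‖x_{n+1} − y_n‖² + 2α·‖y_n − y_{n−1}‖·‖x_{n+1} − y_n‖ − 2·λ_n·((1+θ_n)·g(x_n) − θ_n·g(x_{n−1}) − g(x)) − 2·λ_n·⟪F(y_n), y_n − x⟫. -/
open scoped RealInnerProductSpace

theorem prox_ineq_aux
    {E : Type*} [NormedAddCommGroup E] [InnerProductSpace ℝ E]
    (g : E → ℝ) (hg : ConvexOn ℝ Set.univ g) (l : ℝ) (hl : 0 < l) (p w : E)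
    (hp : ∀ z : E, l * g p + (1 / 2) * ‖p - w‖ ^ 2 ≤ l * g z + (1 / 2) * ‖z - w‖ ^ 2) (z : E) :
    l * (g p - g z) ≤ ⟪p - w, z - p⟫ := by
  by_contra! hcon
  have key : ∀ t : ℝ, 0 < t → t ≤ 1 →
      l * (g p - g z) ≤ ⟪p - w, z - p⟫ + t / 2 * ‖z - p‖ ^ 2 := by
    intro t ht ht1
    have h1 := hp ((1 - t) • p + t • z)
    have h2 := hg.2 (Set.mem_univ p) (Set.mem_univ z) (by linarith : 0 ≤ 1 - t) ht.le (by ring)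
    have h3 : (1 - t) • p + t • z - w = (p - w) + t • (z - p) := by module
    rw [h3, norm_add_sq_real, inner_smul_right, norm_smul, mul_pow, Real.norm_eq_abs, sq_abs] at h1
    simp only [smul_eq_mul] at h2
    have h4 := mul_le_mul_of_nonneg_left h2 hl.le
    refine le_of_mul_le_mul_left ?_ ht
    linarith
  have hN : 0 ≤ ‖z - p‖ ^ 2 := by positivity
  set N := ‖z - p‖ ^ 2
  obtain ⟨d, hd⟩ : ∃ d, d = l * (g p - g z) - ⟪p - w, z - p⟫ := ⟨_, rfl⟩
  have hd0 : 0 < d := by linarith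
  have h := key (d / (d + N)) (by positivity) (by rw [div_le_one (by positivity)]; linarith)
  have h5 : d ≤ d / (d + N) / 2 * N := by linarith
  have h6 : d / (d + N) / 2 * N = d * N / (2 * (d + N)) := by field_simp
  rw [h6, le_div_iff₀ (by positivity)] at h5
  nlinarith [mul_nonneg hd0.le hN, mul_pos hd0 hd0]

/-- Basic inequality for Algorithm 2 (Lemma 2.7 of the paper). -/
theorem basic_lemma_alg2
    {E : Type*} [NormedAddCommGroup E] [InnerProductSpace ℝ E] [FiniteDimensional ℝ E]
    (F : E → E) (g : E → ℝ) (hg : ConvexOn ℝ Set.univ g)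
    (α lamm1 θn : ℝ) (hα : 0 ≤ α) (hlamm1 : 0 < lamm1) (hθn : 0 < θn)
    (lamn : ℝ) (hlamn : lamn = θn * lamm1)
    (xnm1 xn xnp1 ynm1 yn : E)
    (hyn : yn = xn + θn • (xn - xnm1))
    (hxn : ∀ z : E, lamm1 * g xn + (1 / 2) * ‖xn - (xnm1 - lamm1 • F ynm1)‖ ^ 2 ≤
      lamm1 * g z + (1 / 2) * ‖z - (xnm1 - lamm1 • F ynm1)‖ ^ 2)
    (hxnp1 : ∀ z : E, lamn * g xnp1 + (1 / 2) * ‖xnp1 - (xn - lamn • F yn)‖ ^ 2 ≤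
      lamn * g z + (1 / 2) * ‖z - (xn - lamn • F yn)‖ ^ 2)
    (hls : lamn * ‖F yn - F ynm1‖ ≤ α * ‖yn - ynm1‖) :
    ∀ x : E,
      ‖xnp1 - x‖ ^ 2 ≤ ‖xn - x‖ ^ 2 - ‖yn - xn‖ ^ 2 - ‖xnp1 - yn‖ ^ 2
        + 2 * α * ‖yn - ynm1‖ * ‖xnp1 - yn‖
        - 2 * lamn * ((1 + θn) * g xn - θn * g xnm1 - g x)
        - 2 * lamn * ⟪F yn, yn - x⟫ := by
  intro x
  have hlpos : 0 < lamn := by rw [hlamn]; positivity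
  have A := prox_ineq_aux g hg lamn hlpos _ _ hxnp1 x
  have B := prox_ineq_aux g hg lamm1 hlamm1 _ _ hxn xnp1
  have C := prox_ineq_aux g hg lamm1 hlamm1 _ _ hxn xnm1
  have hB := mul_le_mul_of_nonneg_left B hθn.le
  have hC := mul_le_mul_of_nonneg_left (mul_le_mul_of_nonneg_left C hθn.le) hθn.le
  have e1 : θn * ⟪xn - (xnm1 - lamm1 • F ynm1), xnp1 - xn⟫
      + θn * (θn * ⟪xn - (xnm1 - lamm1 • F ynm1), xnm1 - xn⟫)
      = ⟪yn - xn, xnp1 - yn⟫ + lamn * ⟪F ynm1, xnp1 - yn⟫ := by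
    have a1 : xnp1 - yn = (xnp1 - xn) + θn • (xnm1 - xn) := by rw [hyn]; module
    have a2 : yn - xn = θn • (xn - xnm1) := by rw [hyn]; module
    have a3 : xn - (xnm1 - lamm1 • F ynm1) = (xn - xnm1) + lamm1 • F ynm1 := by module
    rw [a1, a2, a3, hlamn]
    simp only [inner_add_left, inner_add_right, real_inner_smul_left, real_inner_smul_right]
    ring
  have e2 : ⟪xnp1 - (xn - lamn • F yn), x - xnp1⟫
      = ⟪xnp1 - xn, x - xnp1⟫ - lamn * ⟪F yn, yn - x⟫ - lamn * ⟪F yn, xnp1 - yn⟫ := by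
    have a3 : xnp1 - (xn - lamn • F yn) = (xnp1 - xn) + lamn • F yn := by module
    have a4 : yn - x = -(x - xnp1) - (xnp1 - yn) := by module
    rw [a3, a4]
    simp only [inner_add_left, inner_sub_right, inner_neg_right, real_inner_smul_left]
    ring
  have e3 : ‖xn - x‖ ^ 2 = ‖xnp1 - xn‖ ^ 2 + 2 * ⟪xnp1 - xn, x - xnp1⟫ + ‖xnp1 - x‖ ^ 2 := by
    rw [norm_sub_rev xn x, norm_sub_rev xnp1 x, ← norm_add_sq_real]
    congr 2
    module
  have e4 : ‖xnp1 - xn‖ ^ 2 = ‖yn - xn‖ ^ 2 + 2 * ⟪yn - xn, xnp1 - yn⟫ + ‖xnp1 - yn‖ ^ 2 := by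
    rw [← norm_add_sq_real]
    congr 2
    module
  have e5 : lamn * ⟪F ynm1, xnp1 - yn⟫ - lamn * ⟪F yn, xnp1 - yn⟫
      ≤ α * ‖yn - ynm1‖ * ‖xnp1 - yn‖ := by
    have b1 : ⟪F ynm1 - F yn, xnp1 - yn⟫ ≤ ‖F ynm1 - F yn‖ * ‖xnp1 - yn‖ :=
      real_inner_le_norm _ _
    rw [norm_sub_rev, inner_sub_left] at b1
    have b2 := mul_le_mul_of_nonneg_left b1 hlpos.le
    have b3 := mul_le_mul_of_nonneg_right hls (norm_nonneg (xnp1 - yn))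
    linarith
  have e6 : θn * (lamm1 * (g xn - g xnp1)) + θn * (θn * (lamm1 * (g xn - g xnm1)))
      = lamn * ((1 + θn) * g xn - θn * g xnm1 - g xnp1) := by rw [hlamn]; ring
  linarith
end

section
/- Let σ ∈ (0,1), L > 0, and let (λ_n) and (θ_n) be sequences of positive real numbers such that for every n ≥ 1 there exists i_n ∈ ℕ with λ_n = √(1+θ_{n−1})·σ^{i_n}·λ_{n−1}, and moreover if i_n ≥ 1 then √(1+θ_{n−1})·σ^{i_n−1}·λ_{n−1} > 1/L. Then λ_n ≥ min(λ_0, σ/L) for all n; in particular liminf λ_n > 0. -/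
/-- Stepsizes in Algorithm 2 are bounded below: `λ_n ≥ min (λ_0) (σ/L)` for all `n`. -/
theorem lambda_bounded_below_alg2
    (σ L : ℝ) (hσ : σ ∈ Set.Ioo (0 : ℝ) 1) (hL : 0 < L)
    (lam θ : ℕ → ℝ) (hlam : ∀ n, 0 < lam n) (hθ : ∀ n, 0 < θ n)
    (h : ∀ n : ℕ, ∃ i : ℕ,
      lam (n + 1) = Real.sqrt (1 + θ n) * σ ^ i * lam n ∧
      (1 ≤ i → 1 / L < Real.sqrt (1 + θ n) * σ ^ (i - 1) * lam n)) :
    ∀ n, min (lam 0) (σ / L) ≤ lam n := by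
  intro n
  induction n with
  | zero => exact min_le_left _ _
  | succ n ih =>
    obtain ⟨i, hi, hi'⟩ := h n
    cases i with
    | zero =>
      have h1 : 1 ≤ Real.sqrt (1 + θ n) := by
        rw [Real.one_le_sqrt]
        linarith [hθ n]
      rw [hi, pow_zero, mul_one]
      exact ih.trans (le_mul_of_one_le_left (hlam n).le h1)
    | succ k =>
      have h2 := hi' (by omega)
      rw [Nat.add_sub_cancel] at h2
      refine (min_le_right _ _).trans ?_
      have h3 := mul_le_mul_of_nonneg_left h2.le hσ.1.le
      rw [hi]
      calc σ / L = σ * (1 / L) := by ring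
        _ ≤ _ := h3
        _ = _ := by ring
end

section
/- Let F : E → E be monotone, g : E → ℝ convex, α ≥ 0, λ_{n−1} > 0, θ_n > 0, θ_{n−1} ≥ 0 with θ_n² ≤ 1 + θ_{n−1}, and set λ_n = θ_n·λ_{n−1}. Let x̄ ∈ E be a solution of VI(F, g), i.e. Ψ(x̄, x) ≥ 0 for all x ∈ E, where Ψ(u, v) := ⟪F(u), v − u⟫ + g(v) − g(u). Let x_{n−1}, x_n, x_{n+1}, y_{n−1}, y_n ∈ E satisfy: y_n = x_n + θ_n·(x_n − x_{n−1}); x_n is the minimizer over E of z ↦ λ_{n−1}·g(z) + (1/2)·‖z − (x_{n−1} − λ_{n−1}·F(y_{n−1}))‖²; x_{n+1} is the minimizer over E of z ↦ λ_n·g(z) + (1/2)·‖z − (x_n − λ_n·F(y_n))‖²; and λ_n·‖F(y_n) − F(y_{n−1})‖ ≤ α·‖y_n − y_{n−1}‖. Then ‖x_{n+1} − x̄‖² ≤ ‖x_n − x̄‖² − (1 − α(1+√2))·‖y_n − x_n‖² − (1 − √2·α)·‖x_{n+1} − y_n‖² + α·‖x_n − y_{n−1}‖² − 2·λ_n·(1+θ_n)·Ψ(x̄,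 x_n) + 2·λ_{n−1}·(1+θ_{n−1})·Ψ(x̄, x_{n−1}). -/
open scoped RealInnerProductSpace

theorem prox_aux {E : Type*} [NormedAddCommGroup E] [InnerProductSpace ℝ E]
    (g : E → ℝ) (hg : ConvexOn ℝ Set.univ g) (l : ℝ) (hl : 0 < l) (p w : E)
    (h : ∀ z : E, l * g p + (1 / 2) * ‖p - w‖ ^ 2 ≤ l * g z + (1 / 2) * ‖z - w‖ ^ 2) (z : E) :
    l * (g p - g z) ≤ ⟪p - w, z - p⟫ := by
  by_contra hc
  push Not at hc
  set d := l * (g p - g z) - ⟪p - w, z - p⟫ with hd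
  have hdpos : 0 < d := by linarith
  have key : ∀ t : ℝ, 0 < t → t ≤ 1 → d ≤ t / 2 * ‖z - p‖ ^ 2 := by
    intro t ht ht1
    have h1 := h ((1 - t) • p + t • z)
    have h2 := hg.2 (Set.mem_univ p) (Set.mem_univ z) (by linarith : 0 ≤ 1 - t) ht.le (by ring)
    have h3 : (1 - t) • p + t • z - w = (p - w) + t • (z - p) := by module
    rw [h3, norm_add_sq_real, norm_smul, inner_smul_right, mul_pow, Real.norm_eq_abs, sq_abs] at h1
    simp only [smul_eq_mul] at h2
    have h4 := mul_le_mul_of_nonneg_left h2 hl.le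
    have h5 : t * d ≤ t * (t / 2 * ‖z - p‖ ^ 2) := by
      rw [hd]; nlinarith
    exact le_of_mul_le_mul_left h5 ht
  have hN : 0 ≤ ‖z - p‖ ^ 2 := by positivity
  set N := ‖z - p‖ ^ 2
  have hk := key (d / (d + N)) (by positivity) (by rw [div_le_one (by positivity)]; linarith)
  rw [div_div, div_mul_eq_mul_div, le_div_iff₀ (by positivity)] at hk
  nlinarith

theorem young_aux (a b c : ℝ) :
    2 * ((a + c) * b) ≤ (1 + Real.sqrt 2) * a ^ 2 + Real.sqrt 2 * b ^ 2 + c ^ 2 := by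
  have hs : Real.sqrt 2 ^ 2 = 2 := Real.sq_sqrt (by norm_num)
  have h0 : 0 < Real.sqrt 2 := by positivity
  set s := Real.sqrt 2
  have h1 : 0 ≤ s * (s * b - (a + c)) ^ 2 := by positivity
  have h2 : 0 ≤ (2 + s) * (a - (s - 1) * c) ^ 2 := by positivity
  have e1 : s * (s * b - (a + c)) ^ 2 = 2 * s * b ^ 2 - 4 * (b * (a + c)) + s * (a + c) ^ 2 := by
    linear_combination (s * b ^ 2 - 2 * b * (a + c)) * hs
  have e2 : (2 + s) * (a - (s - 1) * c) ^ 2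
      = 2 * (1 + s) * a ^ 2 + 2 * c ^ 2 - s * (a + c) ^ 2 := by
    linear_combination (s * c ^ 2 - 2 * a * c) * hs
  linarith

/-- Main inequality (Lemma 2.10 of the paper). -/
theorem main_inequality_lemma
    {E : Type*} [NormedAddCommGroup E] [InnerProductSpace ℝ E] [FiniteDimensional ℝ E]
    (F : E → E) (hFmono : ∀ x y : E, 0 ≤ ⟪F x - F y, x - y⟫)
    (g : E → ℝ) (hg : ConvexOn ℝ Set.univ g)
    (Ψ : E → E → ℝ) (hΨ : ∀ u v : E, Ψ u v = ⟪F u, v - u⟫ + g v - g u)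
    (α lamm1 θn θm1 : ℝ) (hα : 0 ≤ α) (hlamm1 : 0 < lamm1) (hθn : 0 < θn)
    (hθm1 : 0 ≤ θm1) (hθrec : θn ^ 2 ≤ 1 + θm1)
    (lamn : ℝ) (hlamn : lamn = θn * lamm1)
    (xbar : E) (hsol : ∀ x : E, 0 ≤ Ψ xbar x)
    (xnm1 xn xnp1 ynm1 yn : E)
    (hyn : yn = xn + θn • (xn - xnm1))
    (hxn : ∀ z : E, lamm1 * g xn + (1 / 2) * ‖xn - (xnm1 - lamm1 • F ynm1)‖ ^ 2 ≤
      lamm1 * g z + (1 / 2) * ‖z - (xnm1 - lamm1 • F ynm1)‖ ^ 2)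
    (hxnp1 : ∀ z : E, lamn * g xnp1 + (1 / 2) * ‖xnp1 - (xn - lamn • F yn)‖ ^ 2 ≤
      lamn * g z + (1 / 2) * ‖z - (xn - lamn • F yn)‖ ^ 2)
    (hls : lamn * ‖F yn - F ynm1‖ ≤ α * ‖yn - ynm1‖) :
    ‖xnp1 - xbar‖ ^ 2 ≤ ‖xn - xbar‖ ^ 2
      - (1 - α * (1 + Real.sqrt 2)) * ‖yn - xn‖ ^ 2
      - (1 - Real.sqrt 2 * α) * ‖xnp1 - yn‖ ^ 2
      + α * ‖xn - ynm1‖ ^ 2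
      - 2 * lamn * (1 + θn) * Ψ xbar xn
      + 2 * lamm1 * (1 + θm1) * Ψ xbar xnm1 := by
  have hln : 0 < lamn := by rw [hlamn]; positivity
  have A := prox_aux g hg lamn hln _ _ hxnp1 xbar
  have B1 := prox_aux g hg lamm1 hlamm1 _ _ hxn xnp1
  have B2 := prox_aux g hg lamm1 hlamm1 _ _ hxn xnm1
  have M := hFmono yn xbar
  have hCS : lamn * ⟪F yn - F ynm1, yn - xnp1⟫
      ≤ α * ((‖yn - xn‖ + ‖xn - ynm1‖) * ‖xnp1 - yn‖) := by
    have c1 := real_inner_le_norm (F yn - F ynm1) (yn - xnp1)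
    have c2 : ‖yn - ynm1‖ ≤ ‖yn - xn‖ + ‖xn - ynm1‖ := norm_sub_le_norm_sub_add_norm_sub _ _ _
    rw [norm_sub_rev yn xnp1] at c1
    calc _ ≤ lamn * (‖F yn - F ynm1‖ * ‖xnp1 - yn‖) := by gcongr
      _ = (lamn * ‖F yn - F ynm1‖) * ‖xnp1 - yn‖ := by ring
      _ ≤ (α * ‖yn - ynm1‖) * ‖xnp1 - yn‖ := by gcongr
      _ ≤ (α * (‖yn - xn‖ + ‖xn - ynm1‖)) * ‖xnp1 - yn‖ := by gcongr
      _ = _ := by ring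
  have Y := mul_le_mul_of_nonneg_left (young_aux ‖yn - xn‖ ‖xnp1 - yn‖ ‖xn - ynm1‖) hα
  have hP : lamn * θn * Ψ xbar xnm1 ≤ lamm1 * (1 + θm1) * Ψ xbar xnm1 := by
    apply mul_le_mul_of_nonneg_right _ (hsol xnm1)
    rw [hlamn]; nlinarith
  -- combine the two inequalities at the previous step
  have B : lamn * ((1 + θn) * g xn - g xnp1 - θn * g xnm1)
      ≤ ⟪yn - xn + lamn • F ynm1, xnp1 - yn⟫ := by
    have b1 := mul_le_mul_of_nonneg_left B1 hθn.le
    have b2 := mul_le_mul_of_nonneg_left B2 (mul_pos hθn hθn).le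
    have e : ⟪yn - xn + lamn • F ynm1, xnp1 - yn⟫
        = θn * ⟪xn - (xnm1 - lamm1 • F ynm1), xnp1 - xn⟫
          + θn * θn * ⟪xn - (xnm1 - lamm1 • F ynm1), xnm1 - xn⟫ := by
      rw [mul_assoc, ← mul_add, ← inner_smul_right _ _ θn, ← inner_add_right,
        ← real_inner_smul_left]
      congr 1
      · rw [hyn, hlamn]; module
      · rw [hyn]; module
    rw [e, hlamn]
    linarith
  have eA : ⟪xnp1 - (xn - lamn • F yn), xbar - xnp1⟫
      = ⟪xnp1 - xn, xbar - xnp1⟫ + lamn * ⟪F yn, xbar - xnp1⟫ := by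
    rw [← real_inner_smul_left, ← inner_add_left]; congr 1; module
  have eB : ⟪yn - xn + lamn • F ynm1, xnp1 - yn⟫
      = ⟪yn - xn, xnp1 - yn⟫ + lamn * ⟪F ynm1, xnp1 - yn⟫ := by
    rw [← real_inner_smul_left, ← inner_add_left]
  have n1 : ‖xn - xbar‖ ^ 2 = ‖xnp1 - xn‖ ^ 2 + 2 * ⟪xnp1 - xn, xbar - xnp1⟫
      + ‖xnp1 - xbar‖ ^ 2 := by
    rw [norm_sub_rev xn, norm_sub_rev xnp1 xbar, ← norm_add_sq_real]; congr 2; abel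
  have n2 : ‖xnp1 - xn‖ ^ 2 = ‖yn - xn‖ ^ 2 + 2 * ⟪yn - xn, xnp1 - yn⟫
      + ‖xnp1 - yn‖ ^ 2 := by
    rw [← norm_add_sq_real]; congr 2; abel
  have f1 : ⟪F yn, xbar - xnp1⟫ + ⟪F ynm1, xnp1 - yn⟫
      = ⟪F yn - F ynm1, yn - xnp1⟫ - ⟪F yn - F xbar, yn - xbar⟫ - ⟪F xbar, yn - xbar⟫ := by
    simp only [inner_sub_left, inner_sub_right]; ring
  have f2 : ⟪F xbar, yn - xbar⟫
      = (1 + θn) * ⟪F xbar, xn - xbar⟫ - θn * ⟪F xbar, xnm1 - xbar⟫ := by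
    rw [← real_inner_smul_right, ← real_inner_smul_right, ← inner_sub_right]
    congr 1; rw [hyn]; module
  have M' := mul_nonneg hln.le M
  have f3 := congrArg (fun t => lamn * t) f1
  simp only [f2] at f3
  rw [eA] at A
  rw [eB] at B
  have p1 := hΨ xbar xn
  have p2 := hΨ xbar xnm1
  have q : lamn * (1 + θn) * Ψ xbar xn - lamn * θn * Ψ xbar xnm1
      = lamn * ((1 + θn) * ⟪F xbar, xn - xbar⟫ - θn * ⟪F xbar, xnm1 - xbar⟫)
        + lamn * ((1 + θn) * g xn - θn * g xnm1 - g xbar) := by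
    rw [p1, p2]; ring
  linarith
end

section
/- Let α ∈ (0, √2 − 1), x̄ ∈ E, and let (x_n), (y_n) be sequences in E and (c_n) a sequence of nonnegative real numbers such that for all n ≥ 1: ‖x_{n+1} − x̄‖² ≤ ‖x_n − x̄‖² − (1 − α(1+√2))·‖y_n − x_n‖² − (1 − √2·α)·‖x_{n+1} − y_n‖² + α·‖x_n − y_{n−1}‖² − c_n + c_{n−1}. Then (x_n) is bounded, ‖x_n − y_n‖ → 0, ‖x_{n+1} − y_n‖ → 0, and ‖x_{n+1} − x_n‖ → 0 as n → ∞. -/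
/-- Consequences of the main inequality: boundedness of `(x_n)` and vanishing
of `‖x_n - y_n‖`, `‖x_{n+1} - y_n‖`, `‖x_{n+1} - x_n‖`. -/
theorem consequences_main_inequality
    {E : Type*} [NormedAddCommGroup E] [InnerProductSpace ℝ E] [FiniteDimensional ℝ E]
    (α : ℝ) (hα : α ∈ Set.Ioo 0 (Real.sqrt 2 - 1))
    (xbar : E) (x y : ℕ → E) (c : ℕ → ℝ) (hc : ∀ n, 0 ≤ c n)
    (h : ∀ n : ℕ, 1 ≤ n →
      ‖x (n + 1) - xbar‖ ^ 2 ≤ ‖x n - xbar‖ ^ 2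
        - (1 - α * (1 + Real.sqrt 2)) * ‖y n - x n‖ ^ 2
        - (1 - Real.sqrt 2 * α) * ‖x (n + 1) - y n‖ ^ 2
        + α * ‖x n - y (n - 1)‖ ^ 2
        - c n + c (n - 1)) :
    (∃ M : ℝ, ∀ n, ‖x n‖ ≤ M) ∧
    Filter.Tendsto (fun n => ‖x n - y n‖) Filter.atTop (nhds 0) ∧
    Filter.Tendsto (fun n => ‖x (n + 1) - y n‖) Filter.atTop (nhds 0) ∧
    Filter.Tendsto (fun n => ‖x (n + 1) - x n‖) Filter.atTop (nhds 0) := by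
  obtain ⟨hα0, hα1⟩ := hα
  have hs : Real.sqrt 2 * Real.sqrt 2 = 2 := Real.mul_self_sqrt (by norm_num)
  have hs0 : 0 ≤ Real.sqrt 2 := Real.sqrt_nonneg 2
  obtain ⟨δ, hδ⟩ : ∃ δ, δ = 1 - α * (1 + Real.sqrt 2) := ⟨_, rfl⟩
  have hδ0 : 0 < δ := by rw [hδ]; nlinarith
  let V : ℕ → ℝ := fun n => ‖x (n + 1) - xbar‖ ^ 2 + α * ‖x (n + 1) - y n‖ ^ 2 + c n
  let d : ℕ → ℝ := fun n => ‖y (n + 1) - x (n + 1)‖ ^ 2 + ‖x (n + 2) - y (n + 1)‖ ^ 2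
  have hd0 : ∀ n, 0 ≤ d n := fun n => by positivity
  have hV0 : ∀ n, 0 ≤ V n := fun n => by
    have := hc n
    positivity
  have hstep : ∀ n, V (n + 1) ≤ V n - δ * d n := by
    intro n
    have h1 := h (n + 1) (by omega)
    simp only [Nat.add_sub_cancel] at h1
    have h2 : 1 - Real.sqrt 2 * α = δ + α := by rw [hδ]; ring
    rw [h2, ← hδ] at h1
    simp only [V, d]
    linarith
  have hanti : Antitone V := antitone_nat_of_succ_le fun n => by
    have := mul_nonneg hδ0.le (hd0 n)
    linarith [hstep n]
  have hconv : Filter.Tendsto V Filter.atTop (nhds (⨅ i, V i)) :=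
    tendsto_atTop_ciInf hanti ⟨0, by rintro _ ⟨n, rfl⟩; exact hV0 n⟩
  have hdiff : Filter.Tendsto (fun n => (V n - V (n + 1)) / δ) Filter.atTop (nhds 0) := by
    have := (hconv.sub ((Filter.tendsto_add_atTop_iff_nat 1).2 hconv)).div_const δ
    simpa using this
  have hd : Filter.Tendsto d Filter.atTop (nhds 0) := by
    refine squeeze_zero hd0 (fun n => ?_) hdiff
    rw [le_div_iff₀ hδ0]
    linarith [hstep n]
  have hsq : Filter.Tendsto (fun n => Real.sqrt (d n)) Filter.atTop (nhds 0) := by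
    simpa using hd.sqrt
  have hA : Filter.Tendsto (fun n => ‖x n - y n‖) Filter.atTop (nhds 0) := by
    rw [← Filter.tendsto_add_atTop_iff_nat 1]
    refine squeeze_zero (fun n => norm_nonneg _) (fun n => ?_) hsq
    rw [norm_sub_rev]
    apply Real.le_sqrt_of_sq_le
    exact le_add_of_nonneg_right (sq_nonneg _)
  have hB : Filter.Tendsto (fun n => ‖x (n + 1) - y n‖) Filter.atTop (nhds 0) := by
    rw [← Filter.tendsto_add_atTop_iff_nat 1]
    refine squeeze_zero (fun n => norm_nonneg _) (fun n => ?_) hsq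
    apply Real.le_sqrt_of_sq_le
    exact le_add_of_nonneg_left (sq_nonneg _)
  refine ⟨⟨max ‖x 0‖ (Real.sqrt (V 0) + ‖xbar‖), ?_⟩, hA, hB, ?_⟩
  · intro n
    cases n with
    | zero => exact le_max_left _ _
    | succ n =>
      refine le_trans ?_ (le_max_right _ _)
      have h1 : ‖x (n + 1) - xbar‖ ≤ Real.sqrt (V 0) := by
        apply Real.le_sqrt_of_sq_le
        have h2 : V n ≤ V 0 := hanti (Nat.zero_le n)
        have h3 : 0 ≤ α * ‖x (n + 1) - y n‖ ^ 2 := by positivity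
        have h4 : V n = ‖x (n + 1) - xbar‖ ^ 2 + α * ‖x (n + 1) - y n‖ ^ 2 + c n := rfl
        linarith [hc n]
      have h5 := norm_le_norm_sub_add (x (n + 1)) xbar
      linarith
  · have hAB := hB.add hA
    rw [add_zero] at hAB
    refine squeeze_zero (fun n => norm_nonneg _) (fun n => ?_) hAB
    have := norm_sub_le_norm_sub_add_norm_sub (x (n + 1)) (y n) (x n)
    rwa [norm_sub_rev (y n) (x n)] at this
end

section
/- Let F : E → E be continuous and g : E → ℝ convex. Let (x_n), (y_n) be sequences in E and (λ_n) positive reals such that for every n and every x ∈ E: ⟪x_{n+1} − x_n + λ_n·F(y_n), x − x_{n+1}⟫ ≥ λ_n·(g(x_{n+1}) − g(x)). Suppose there is a strictly increasing sequence (n_k) of indices and a point x* ∈ E with x_{n_k} → x*, y_{n_k} → x*, ‖x_{n_k+1} − x_{n_k}‖ → 0, and λ_{n_k} ≥ c for some c > 0 and all k. Then ⟪F(x*), x − x*⟫ ≥ g(x*) − g(x) for all x ∈ E, i.e. x* is a solution of the variational inequality VI(F, g). -/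
open scoped RealInnerProductSpace

/-- Cluster points of the iterates along a subsequence with stepsizes bounded
away from zero solve the variational inequality. -/
theorem cluster_point_solves_vi
    {E : Type*} [NormedAddCommGroup E] [InnerProductSpace ℝ E] [FiniteDimensional ℝ E]
    (F : E → E) (hF : Continuous F) (g : E → ℝ) (hg : ConvexOn ℝ Set.univ g)
    (x y : ℕ → E) (lam : ℕ → ℝ) (hlam : ∀ n, 0 < lam n)
    (h : ∀ n : ℕ, ∀ z : E,
      lam n * (g (x (n + 1)) - g z) ≤ ⟪x (n + 1) - x n + lam n • F (y n), z - x (n + 1)⟫)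
    (nk : ℕ → ℕ) (hnk : StrictMono nk) (xs : E)
    (hx : Filter.Tendsto (fun k => x (nk k)) Filter.atTop (nhds xs))
    (hy : Filter.Tendsto (fun k => y (nk k)) Filter.atTop (nhds xs))
    (hdiff : Filter.Tendsto (fun k => ‖x (nk k + 1) - x (nk k)‖) Filter.atTop (nhds 0))
    (c : ℝ) (hc : 0 < c) (hsep : ∀ k, c ≤ lam (nk k)) :
    ∀ z : E, g xs - g z ≤ ⟪F xs, z - xs⟫ := by
  intro z
  have hgc : Continuous g := continuousOn_univ.mp (hg.continuousOn isOpen_univ)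
  have hd : Filter.Tendsto (fun k => x (nk k + 1) - x (nk k)) Filter.atTop (nhds 0) :=
    tendsto_zero_iff_norm_tendsto_zero.mpr hdiff
  have hx1 : Filter.Tendsto (fun k => x (nk k + 1)) Filter.atTop (nhds xs) := by
    simpa using hd.add hx
  have hL : Filter.Tendsto (fun k => g (x (nk k + 1)) - g z) Filter.atTop (nhds (g xs - g z)) :=
    ((hgc.tendsto xs).comp hx1).sub_const _
  have hz : Filter.Tendsto (fun k => z - x (nk k + 1)) Filter.atTop (nhds (z - xs)) :=
    hx1.const_sub z
  have hFy : Filter.Tendsto (fun k => F (y (nk k))) Filter.atTop (nhds (F xs)) :=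
    (hF.tendsto xs).comp hy
  have hR : Filter.Tendsto (fun k => ‖x (nk k + 1) - x (nk k)‖ * ‖z - x (nk k + 1)‖ / c
      + ⟪F (y (nk k)), z - x (nk k + 1)⟫) Filter.atTop (nhds ⟪F xs, z - xs⟫) := by
    have := ((hdiff.mul hz.norm).div_const c).add (hFy.inner (𝕜 := ℝ) hz)
    simpa using this
  refine le_of_tendsto_of_tendsto' hL hR fun k => ?_
  have h1 := h (nk k) z
  rw [inner_add_left, real_inner_smul_left] at h1
  have h2 := real_inner_le_norm (x (nk k + 1) - x (nk k)) (z - x (nk k + 1))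
  have hB : 0 ≤ ‖x (nk k + 1) - x (nk k)‖ * ‖z - x (nk k + 1)‖ := by positivity
  have hk := hsep k
  rw [← sub_le_iff_le_add, le_div_iff₀ hc]
  by_cases hA : g (x (nk k + 1)) - g z - ⟪F (y (nk k)), z - x (nk k + 1)⟫ ≤ 0
  · exact (mul_nonpos_of_nonpos_of_nonneg hA hc.le).trans hB
  · have h3 := mul_le_mul_of_nonneg_left hk (not_le.mp hA).le
    linarith
end

section
/- Let f : E → ℝ be convex, α ∈ (0, √2 − 1], N ≥ 1, and let (x_n)_{0≤n≤N+1}, (y_n)_{0≤n≤N} be points of E and (λ_n)_{1≤n≤N} positive reals such that for every 1 ≤ n ≤ N and every x ∈ E: λ_n·(f(y_n) − f(x)) ≤ (1/2)·‖x_n − x‖² − (1/2)·‖x_{n+1} − x‖² − ((1 − √2·α)/2)·‖x_{n+1} − y_n‖² + (α/2)·‖x_n − y_{n−1}‖². Set S_N = Σ_{n=1}^N λ_n and ŷ_N = (Σ_{n=1}^N λ_n·y_n)/S_N. Then for every x ∈ E: f(ŷ_N) − f(x) ≤ (‖x_1 − x‖² + α·‖x_1 − y_0‖²) / (2·S_N).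 -/
/-- Ergodic rate of convergence for constrained minimization. -/
theorem ergodic_rate_minimization
    {E : Type*} [NormedAddCommGroup E] [InnerProductSpace ℝ E] [FiniteDimensional ℝ E]
    (f : E → ℝ) (hf : ConvexOn ℝ Set.univ f)
    (α : ℝ) (hα : α ∈ Set.Ioc 0 (Real.sqrt 2 - 1))
    (N : ℕ) (hN : 1 ≤ N)
    (x y : ℕ → E) (lam : ℕ → ℝ)
    (hlam : ∀ n, 1 ≤ n → n ≤ N → 0 < lam n)
    (hkey : ∀ n, 1 ≤ n → n ≤ N → ∀ z : E,
      lam n * (f (y n) - f z) ≤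
        (1 / 2) * ‖x n - z‖ ^ 2 - (1 / 2) * ‖x (n + 1) - z‖ ^ 2
          - ((1 - Real.sqrt 2 * α) / 2) * ‖x (n + 1) - y n‖ ^ 2
          + (α / 2) * ‖x n - y (n - 1)‖ ^ 2) :
    ∀ z : E,
      f ((∑ n ∈ Finset.Icc 1 N, lam n)⁻¹ • ∑ n ∈ Finset.Icc 1 N, lam n • y n) - f z ≤
        (‖x 1 - z‖ ^ 2 + α * ‖x 1 - y 0‖ ^ 2) / (2 * ∑ n ∈ Finset.Icc 1 N, lam n) := by
  intro z
  obtain ⟨hα0, hα1⟩ := hα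
  have hs2 : Real.sqrt 2 * Real.sqrt 2 = 2 := Real.mul_self_sqrt (by norm_num)
  have hs0 : 0 ≤ Real.sqrt 2 := Real.sqrt_nonneg 2
  have hc : α ≤ 1 - Real.sqrt 2 * α := by nlinarith
  have tel : ∀ M, M ≤ N → ∑ n ∈ Finset.Icc 1 M, lam n * (f (y n) - f z) ≤
      (1 / 2) * ‖x 1 - z‖ ^ 2 + (α / 2) * ‖x 1 - y 0‖ ^ 2
        - (1 / 2) * ‖x (M + 1) - z‖ ^ 2 - (α / 2) * ‖x (M + 1) - y M‖ ^ 2 := by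
    intro M
    induction M with
    | zero => intro _; simp
    | succ k ih =>
      intro hk
      have h1 := ih (by omega)
      have h2 := hkey (k + 1) (by omega) hk z
      rw [Finset.sum_Icc_succ_top (by omega)]
      simp only [Nat.add_sub_cancel] at h2
      have h3 := mul_le_mul_of_nonneg_right hc (sq_nonneg ‖x (k + 1 + 1) - y (k + 1)‖)
      linarith
  have hT := tel N le_rfl
  have hpos : ∀ n ∈ Finset.Icc 1 N, 0 < lam n := fun n hn =>
    hlam n (Finset.mem_Icc.1 hn).1 (Finset.mem_Icc.1 hn).2
  have hS : 0 < ∑ n ∈ Finset.Icc 1 N, lam n :=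
    Finset.sum_pos hpos ⟨1, Finset.mem_Icc.2 ⟨le_rfl, hN⟩⟩
  have hJ := hf.map_centerMass_le (t := Finset.Icc 1 N) (w := lam) (p := y)
    (fun n hn => (hpos n hn).le) hS (fun _ _ => Set.mem_univ _)
  simp only [Finset.centerMass, Function.comp, smul_eq_mul] at hJ
  rw [inv_mul_eq_div, le_div_iff₀ hS] at hJ
  have hE : ∑ n ∈ Finset.Icc 1 N, lam n * (f (y n) - f z) =
      ∑ n ∈ Finset.Icc 1 N, lam n * f (y n) - (∑ n ∈ Finset.Icc 1 N, lam n) * f z := by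
    simp only [mul_sub, Finset.sum_sub_distrib, Finset.sum_mul]
  have h4 : 0 ≤ (α / 2) * ‖x (N + 1) - y N‖ ^ 2 := by positivity
  have h5 := sq_nonneg ‖x (N + 1) - z‖
  rw [le_div_iff₀ (by positivity)]
  linarith
end

section
/- Let f : E → ℝ be convex and differentiable with gradient ∇f, g : E → ℝ convex, Φ := f + g, α ≥ 0, θ ∈ [1,2], λ_{n−1} > 0, θ_n > 0, and set λ_n = (2 − 1/θ)·θ_n·λ_{n−1}. Let x_{n−1}, x_n, x_{n+1}, y_{n−1}, y_n ∈ E satisfy: y_n = x_n + θ_n·(x_n − x_{n−1}); x_n is the minimizer over E of z ↦ λ_{n−1}·g(z) + (1/2)·‖z − (x_{n−1} − λ_{n−1}·∇f(y_{n−1}))‖²; x_{n+1} is the minimizer over E of z ↦ λ_n·g(z) + (1/2)·‖z − (x_n − λ_n·∇f(y_n))‖²; and λ_n·‖∇f(y_n) − ∇f(y_{n−1})‖ ≤ α·(2 − 1/θ)·‖y_n − y_{n−1}‖. Then for every x ∈ E: ‖x_{n+1} − x‖² ≤ ‖x_n − x‖² − (2θ − 1)·[(1 − α(1+√2))·‖x_n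 − y_n‖² + (1 − √2·α)·‖x_{n+1} − y_n‖² − α·‖x_n − y_{n−1}‖²] − 2·λ_n·((1 + θ·θ_n)·Φ(x_n) − θ·θ_n·Φ(x_{n−1}) − Φ(x)). -/
open scoped RealInnerProductSpace

lemma aux_grad {E : Type*} [NormedAddCommGroup E] [InnerProductSpace ℝ E] [CompleteSpace E]
    (f : E → ℝ) (hf : ConvexOn ℝ Set.univ f) (v x z : E) (h : HasGradientAt f v x) :
    inner ℝ v (z - x) ≤ f z - f x := by
  have hc : ConvexOn ℝ Set.univ (f ∘ AffineMap.lineMap (k := ℝ) x z) := by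
    simpa using hf.comp_affineMap (AffineMap.lineMap (k := ℝ) x z)
  have h0 : HasFDerivAt f (InnerProductSpace.toDual ℝ E v) (AffineMap.lineMap (k := ℝ) x z 0) := by
    simpa using h.hasFDerivAt
  have hd : HasDerivAt (f ∘ AffineMap.lineMap (k := ℝ) x z) (inner ℝ v (z - x)) 0 := by
    have := h0.comp_hasDerivAt (0 : ℝ) (AffineMap.hasDerivAt_lineMap (a := x) (b := z) (x := (0:ℝ)))
    simpa using this
  have := hc.le_slope_of_hasDerivAt (Set.mem_univ 0) (Set.mem_univ 1) one_pos hd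
  simpa [slope_def_field] using this

lemma aux_prox {E : Type*} [NormedAddCommGroup E] [InnerProductSpace ℝ E]
    (g : E → ℝ) (hg : ConvexOn ℝ Set.univ g) (l : ℝ) (hl : 0 < l) (x w : E)
    (h : ∀ z : E, l * g x + (1 / 2) * ‖x - w‖ ^ 2 ≤ l * g z + (1 / 2) * ‖z - w‖ ^ 2) (z : E) :
    l * (g x - g z) ≤ inner ℝ (x - w) (z - x) := by
  have key : ∀ t : ℝ, 0 < t → t ≤ 1 →
      l * (g x - g z) ≤ inner ℝ (x - w) (z - x) + t / 2 * ‖z - x‖ ^ 2 := by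
    intro t ht ht1
    have h1 := h (x + t • (z - x))
    have h2 : g (x + t • (z - x)) ≤ (1 - t) * g x + t * g z := by
      have := hg.2 (Set.mem_univ x) (Set.mem_univ z) (by linarith : 0 ≤ 1 - t) ht.le (by ring)
      have e : x + t • (z - x) = (1 - t) • x + t • z := by module
      rw [e]; simpa using this
    have h3 : ‖x + t • (z - x) - w‖ ^ 2
        = ‖x - w‖ ^ 2 + 2 * (t * inner ℝ (x - w) (z - x)) + t ^ 2 * ‖z - x‖ ^ 2 := by
      have e : x + t • (z - x) - w = (x - w) + t • (z - x) := by module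
      rw [e, norm_add_sq_real, inner_smul_right, norm_smul, mul_pow, Real.norm_eq_abs, sq_abs]
    have h4 := mul_le_mul_of_nonneg_left h2 hl.le
    rw [h3] at h1
    have h5 : t * (l * (g x - g z)) ≤ t * (inner ℝ (x - w) (z - x) + t / 2 * ‖z - x‖ ^ 2) := by
      nlinarith
    exact le_of_mul_le_mul_left h5 ht
  have hlim : Filter.Tendsto (fun t : ℝ => inner ℝ (x - w) (z - x) + t / 2 * ‖z - x‖ ^ 2)
      (nhdsWithin 0 (Set.Ioi 0)) (nhds (inner ℝ (x - w) (z - x))) := by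
    have : Continuous (fun t : ℝ => inner ℝ (x - w) (z - x) + t / 2 * ‖z - x‖ ^ 2) := by fun_prop
    have h := (this.tendsto 0).mono_left (nhdsWithin_le_nhds (s := Set.Ioi (0:ℝ)))
    simpa using h
  refine ge_of_tendsto hlim ?_
  filter_upwards [Ioc_mem_nhdsGT (zero_lt_one (α := ℝ))] with t ht
  exact key t ht.1 ht.2

lemma aux_real (p q a b : ℝ) (ha : 0 ≤ a) (hb : 0 ≤ b)
    (hpq : a ≤ p + q) :
    2 * (a * b) ≤ (1 + Real.sqrt 2) * p ^ 2 + Real.sqrt 2 * b ^ 2 + q ^ 2 := by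
  have hs : Real.sqrt 2 * Real.sqrt 2 = 2 := Real.mul_self_sqrt (by norm_num)
  have hs0 : 0 ≤ Real.sqrt 2 := Real.sqrt_nonneg 2
  set s := Real.sqrt 2
  have h1 : a * b ≤ (p + q) * b := mul_le_mul_of_nonneg_right hpq hb
  have e : (1 + s) * p ^ 2 + s * b ^ 2 + q ^ 2 - 2 * ((p + q) * b)
      = s / 2 * (s * b - (p + q)) ^ 2 + (1 + s / 2) * (p - (s - 1) * q) ^ 2 := by
    have h3 : s ^ 2 = 2 := by nlinarith
    have h4 : s ^ 3 = 2 * s := by rw [pow_succ, h3]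
    ring_nf
    simp only [h3, h4]
    ring
  have : 0 ≤ s / 2 * (s * b - (p + q)) ^ 2 + (1 + s / 2) * (p - (s - 1) * q) ^ 2 := by positivity
  linarith

/-- Basic inequality for Algorithm 3 (Lemma 3.1 of the paper). -/
theorem basic_lemma_alg3
    {E : Type*} [NormedAddCommGroup E] [InnerProductSpace ℝ E] [FiniteDimensional ℝ E]
    (f : E → ℝ) (hf : ConvexOn ℝ Set.univ f)
    (f' : E → E) (hf' : ∀ z : E, HasGradientAt f (f' z) z)
    (g : E → ℝ) (hg : ConvexOn ℝ Set.univ g)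
    (Φ : E → ℝ) (hΦ : ∀ z : E, Φ z = f z + g z)
    (α : ℝ) (hα : 0 ≤ α) (th : ℝ) (hth : th ∈ Set.Icc (1 : ℝ) 2)
    (lamm1 θn : ℝ) (hlamm1 : 0 < lamm1) (hθn : 0 < θn)
    (lamn : ℝ) (hlamn : lamn = (2 - 1 / th) * θn * lamm1)
    (xnm1 xn xnp1 ynm1 yn : E)
    (hyn : yn = xn + θn • (xn - xnm1))
    (hxn : ∀ z : E, lamm1 * g xn + (1 / 2) * ‖xn - (xnm1 - lamm1 • f' ynm1)‖ ^ 2 ≤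
      lamm1 * g z + (1 / 2) * ‖z - (xnm1 - lamm1 • f' ynm1)‖ ^ 2)
    (hxnp1 : ∀ z : E, lamn * g xnp1 + (1 / 2) * ‖xnp1 - (xn - lamn • f' yn)‖ ^ 2 ≤
      lamn * g z + (1 / 2) * ‖z - (xn - lamn • f' yn)‖ ^ 2)
    (hls : lamn * ‖f' yn - f' ynm1‖ ≤ α * (2 - 1 / th) * ‖yn - ynm1‖) :
    ∀ z : E,
      ‖xnp1 - z‖ ^ 2 ≤ ‖xn - z‖ ^ 2
        - (2 * th - 1) *
          ((1 - α * (1 + Real.sqrt 2)) * ‖xn - yn‖ ^ 2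
            + (1 - Real.sqrt 2 * α) * ‖xnp1 - yn‖ ^ 2
            - α * ‖xn - ynm1‖ ^ 2)
        - 2 * lamn * ((1 + th * θn) * Φ xn - th * θn * Φ xnm1 - Φ z) := by
  intro z
  obtain ⟨ht1, ht2⟩ := hth
  have ht0 : 0 < th := by linarith
  obtain ⟨c, hc⟩ : ∃ c, c = 2 - 1 / th := ⟨_, rfl⟩
  rw [← hc] at hlamn hls
  have hthc : th * c = 2 * th - 1 := by rw [hc]; field_simp
  have hc0 : 0 < c := by
    by_contra hcon
    nlinarith
  have hl : 0 < lamn := by rw [hlamn]; positivity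
  have P1 := aux_prox g hg lamn hl _ _ hxnp1 z
  have P2 := aux_prox g hg lamn hl _ _ hxnp1 xn
  have Q1 := aux_prox g hg lamm1 hlamm1 _ _ hxn xnp1
  have Q2 := aux_prox g hg lamm1 hlamm1 _ _ hxn xnm1
  have G1 := aux_grad f hf _ _ z (hf' yn)
  have G2 := aux_grad f hf _ _ xn (hf' yn)
  have G3 : (1 + θn) * f xn - θn * f xnm1 ≤ f yn := by
    have hpos : 0 < 1 + θn := by linarith
    have h := hf.2 (Set.mem_univ yn) (Set.mem_univ xnm1)
      (by positivity : 0 ≤ 1 / (1 + θn)) (by positivity : 0 ≤ θn / (1 + θn)) (by field_simp)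
    have e : (1 / (1 + θn)) • yn + (θn / (1 + θn)) • xnm1 = xn := by
      rw [hyn]
      match_scalars <;> field_simp <;> ring
    rw [e] at h
    simp only [smul_eq_mul] at h
    have h' := mul_le_mul_of_nonneg_left h hpos.le
    have e2 : (1 + θn) * (1 / (1 + θn) * f yn + θn / (1 + θn) * f xnm1) = f yn + θn * f xnm1 := by
      field_simp
    linarith
  have CS : 2 * th * lamn * inner ℝ (f' ynm1 - f' yn) (xnp1 - yn) ≤
      (2 * th - 1) * α * ((1 + Real.sqrt 2) * ‖xn - yn‖ ^ 2 + Real.sqrt 2 * ‖xnp1 - yn‖ ^ 2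
        + ‖xn - ynm1‖ ^ 2) := by
    have h1 := real_inner_le_norm (f' ynm1 - f' yn) (xnp1 - yn)
    rw [norm_sub_rev (f' ynm1)] at h1
    have h2 : ‖yn - ynm1‖ ≤ ‖xn - yn‖ + ‖xn - ynm1‖ := by
      rw [norm_sub_rev xn yn]; exact norm_sub_le_norm_sub_add_norm_sub yn xn ynm1
    have h3 := aux_real _ _ _ _ (norm_nonneg (yn - ynm1)) (norm_nonneg (xnp1 - yn)) h2
    have hk : 0 ≤ (2 * th - 1) * α := mul_nonneg (by linarith) hα
    calc 2 * th * lamn * inner ℝ (f' ynm1 - f' yn) (xnp1 - yn)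
        ≤ 2 * th * lamn * (‖f' yn - f' ynm1‖ * ‖xnp1 - yn‖) :=
          mul_le_mul_of_nonneg_left h1 (by positivity)
      _ = 2 * th * ‖xnp1 - yn‖ * (lamn * ‖f' yn - f' ynm1‖) := by ring
      _ ≤ 2 * th * ‖xnp1 - yn‖ * (α * c * ‖yn - ynm1‖) :=
          mul_le_mul_of_nonneg_left hls (by positivity)
      _ = (2 * th - 1) * α * (2 * (‖yn - ynm1‖ * ‖xnp1 - yn‖)) := by rw [← hthc]; ring
      _ ≤ _ := mul_le_mul_of_nonneg_left h3 hk
  have Q : lamn * ((1 + θn) * g xn - g xnp1 - θn * g xnm1) ≤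
      c * inner ℝ (yn - xn) (xnp1 - yn) + lamn * inner ℝ (f' ynm1) (xnp1 - yn) := by
    have hsum : lamm1 * ((1 + θn) * g xn - g xnp1 - θn * g xnm1) ≤
        inner ℝ (xn - (xnm1 - lamm1 • f' ynm1)) (xnp1 - yn) := by
      have e : xnp1 - yn = (xnp1 - xn) + θn • (xnm1 - xn) := by rw [hyn]; module
      rw [e, inner_add_right, inner_smul_right]
      have := mul_le_mul_of_nonneg_left Q2 hθn.le
      linarith
    have h2 := mul_le_mul_of_nonneg_left hsum (mul_pos hc0 hθn).le
    have e : c * inner ℝ (yn - xn) (xnp1 - yn) + lamn * inner ℝ (f' ynm1) (xnp1 - yn)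
        = (c * θn) * inner ℝ (xn - (xnm1 - lamm1 • f' ynm1)) (xnp1 - yn) := by
      rw [← real_inner_smul_left, ← real_inner_smul_left, ← real_inner_smul_left, ← inner_add_left]
      congr 1
      rw [hlamn, hyn]; module
    rw [e, hlamn]
    linarith
  have I1 : inner ℝ (xnp1 - (xn - lamn • f' yn)) (z - xnp1)
      = (‖xn - z‖ ^ 2 - ‖xnp1 - z‖ ^ 2 - ‖xnp1 - xn‖ ^ 2) / 2
        + lamn * inner ℝ (f' yn) (z - xnp1) := by
    have e : xnp1 - (xn - lamn • f' yn) = (xnp1 - xn) + lamn • f' yn := by module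
    have e2 : xn - z = -((xnp1 - xn) + (z - xnp1)) := by abel
    rw [e, inner_add_left, real_inner_smul_left, e2, norm_neg, norm_add_sq_real,
      norm_sub_rev z xnp1]
    ring
  have I2 : inner ℝ (xnp1 - (xn - lamn • f' yn)) (xn - xnp1)
      = - ‖xnp1 - xn‖ ^ 2 + lamn * inner ℝ (f' yn) (xn - xnp1) := by
    have e : xnp1 - (xn - lamn • f' yn) = (xnp1 - xn) + lamn • f' yn := by module
    rw [e, inner_add_left, real_inner_smul_left, ← neg_sub xnp1 xn, inner_neg_right,
      real_inner_self_eq_norm_sq]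
  have I3 : inner ℝ (yn - xn) (xnp1 - yn)
      = (‖xnp1 - xn‖ ^ 2 - ‖xn - yn‖ ^ 2 - ‖xnp1 - yn‖ ^ 2) / 2 := by
    have e : xnp1 - xn = (yn - xn) + (xnp1 - yn) := by abel
    rw [e, norm_add_sq_real, norm_sub_rev xn yn]
    ring
  rw [I1] at P1
  rw [I2] at P2
  rw [I3] at Q
  have P2' := mul_le_mul_of_nonneg_left P2 (by linarith : 0 ≤ th - 1)
  have Q' := mul_le_mul_of_nonneg_left Q ht0.le
  rw [mul_add th, ← mul_assoc th c, hthc] at Q'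
  have G : inner ℝ (f' yn) (z - yn) + (th - 1) * inner ℝ (f' yn) (xn - yn) ≤
      f z - (1 + th * θn) * f xn + th * θn * f xnm1 := by
    have := mul_le_mul_of_nonneg_left G2 (by linarith : 0 ≤ th - 1)
    have := mul_le_mul_of_nonneg_left G3 ht0.le
    linarith
  have G' := mul_le_mul_of_nonneg_left G hl.le
  rw [hΦ, hΦ, hΦ]
  simp only [inner_sub_left, inner_sub_right] at P1 P2' Q' G' CS
  linarith
end
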